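/- arXiv:2408.13675 — 2 statements merged into one kernel-verified Lean document; each statement's English description precedes it below -/
import Mathlib

section
/- For every positive integer d, every vector w ∈ ℚ^d and every positive integer N, there exists a vector w̄ ∈ ℤ^d with ‖w̄‖_∞ ≤ 2^{4d³}·N^{d(d+2)} such that sign(w·b) = sign(w̄·b) for every vector b ∈ ℤ^d with ‖b‖₁ ≤ N − 1. -/
/-!
The vector `w̄` is built by repeated simultaneous Diophantine approximation, following Frank and
Tardos. Scale `w` so that its largest entry in absolute value is `1`. Dirichlet's theorem
(`exists_simultaneous_approx`) gives `1 ≤ q ≤ N ^ d` and an integer vector `p` with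
`|q w_i - p_i| < 1 / N`. Put `w' = q w - p`. For `‖b‖₁ ≤ N - 1` one has `|w' · b| < 1`, so the
integer `p · b` determines the sign of `w · b` unless it vanishes, and in that case
`w · b` has the sign of `w' · b`. Where `w_i = ±1` or `w_i = 0`, the number `q w_i - p_i` is an
integer of absolute value less than `1`, so `w'` has strictly fewer nonzero entries than `w`.

By induction on the number of nonzero entries, `w'` can be replaced by an integer vector `v` with
entries at most `B`, and `w̄ = N B p + v` works: `|v · b| < N B`, so `p · b` again decides the sign
unless it is zero. Each step multiplies the bound by at most `2 N ^ (d + 1)`, and after `d` steps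
the entries are at most `2 ^ d * N ^ (d (d + 1))`.
-/

/-- Dirichlet's simultaneous approximation theorem, by the pigeonhole principle applied to the
fractional parts of `j * u i` for `0 ≤ j ≤ N ^ d`. -/
lemma exists_simultaneous_approx (d N : ℕ) (hN : 0 < N) (u : Fin d → ℚ) :
    ∃ (q : ℕ) (p : Fin d → ℤ), 0 < q ∧ q ≤ N ^ d ∧
      ∀ i, |(q : ℚ) * u i - p i| < 1 / N := by
  have hNQ : (0 : ℚ) < N := by exact_mod_cast hN
  let f : Fin (N ^ d + 1) → (Fin d → Fin N) := fun j i =>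
    ⟨⌊(N : ℚ) * Int.fract ((j : ℕ) * u i)⌋.toNat, by
      have h0 : 0 ≤ ⌊(N : ℚ) * Int.fract ((j : ℕ) * u i)⌋ :=
        Int.floor_nonneg.2 (mul_nonneg hNQ.le (Int.fract_nonneg _))
      have h1 : ⌊(N : ℚ) * Int.fract ((j : ℕ) * u i)⌋ < (N : ℤ) := by
        rw [Int.floor_lt]
        push_cast
        nlinarith [Int.fract_lt_one ((j : ℕ) * u i)]
      omega⟩
  have key : ∀ a b : Fin (N ^ d + 1), a < b → f a = f b →
      ∃ (q : ℕ) (p : Fin d → ℤ), 0 < q ∧ q ≤ N ^ d ∧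
        ∀ i, |(q : ℚ) * u i - p i| < 1 / N := by
    intro a b hab hf
    have hab' : (a : ℕ) < b := hab
    refine ⟨b - a, fun i => ⌊((b : ℕ) : ℚ) * u i⌋ - ⌊((a : ℕ) : ℚ) * u i⌋, by omega,
      by omega, fun i => ?_⟩
    have h := congrArg Fin.val (congrFun hf i)
    simp only [f] at h
    have ha : 0 ≤ ⌊(N : ℚ) * Int.fract ((a : ℕ) * u i)⌋ :=
      Int.floor_nonneg.2 (mul_nonneg hNQ.le (Int.fract_nonneg _))
    have hb : 0 ≤ ⌊(N : ℚ) * Int.fract ((b : ℕ) * u i)⌋ :=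
      Int.floor_nonneg.2 (mul_nonneg hNQ.le (Int.fract_nonneg _))
    have h' : ⌊(N : ℚ) * Int.fract ((b : ℕ) * u i)⌋ = ⌊(N : ℚ) * Int.fract ((a : ℕ) * u i)⌋ := by
      omega
    have h2 := Int.abs_sub_lt_one_of_floor_eq_floor h'
    rw [← mul_sub, abs_mul, abs_of_pos hNQ] at h2
    rw [lt_div_iff₀ hNQ, mul_comm]
    have h3 : ((b - a : ℕ) : ℚ) * u i - ((⌊((b : ℕ) : ℚ) * u i⌋ - ⌊((a : ℕ) : ℚ) * u i⌋ : ℤ) : ℚ) =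
        Int.fract ((b : ℕ) * u i) - Int.fract ((a : ℕ) * u i) := by
      rw [Nat.cast_sub hab'.le]
      push_cast
      simp only [Int.fract]
      ring
    rwa [h3]
  obtain ⟨a, b, hne, hf⟩ := Fintype.exists_ne_map_eq_of_card_lt f (by simp)
  rcases lt_or_gt_of_ne hne with h | h
  · exact key a b h hf
  · exact key b a h hf.symm

/-- A nonzero integer multiple of `M` keeps its sign under a perturbation smaller than `M`. -/
lemma sign_mul_add_of_abs_lt {K : Type*} [Ring K] [LinearOrder K] [IsStrictOrderedRing K]
    (X : ℤ) (hX : X ≠ 0) (M e : K) (he : |e| < M) :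
    SignType.sign (M * (X : K) + e) = SignType.sign X := by
  obtain ⟨h1, h2⟩ := abs_lt.1 he
  have hM : 0 < M := (abs_nonneg e).trans_lt he
  rcases lt_or_gt_of_ne hX with h | h
  · have hx : (X : K) ≤ -1 := by
      have : X ≤ -1 := by omega
      exact_mod_cast this
    rw [sign_neg h, sign_neg]
    have := mul_le_mul_of_nonneg_left hx hM.le
    rw [mul_neg_one] at this
    calc M * (X : K) + e < -M + M := add_lt_add_of_le_of_lt this h2
      _ = 0 := neg_add_cancel M
  · have hx : (1 : K) ≤ X := by exact_mod_cast h
    rw [sign_pos h, sign_pos]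
    have := mul_le_mul_of_nonneg_left hx hM.le
    rw [mul_one] at this
    calc (0 : K) = M + -M := (add_neg_cancel M).symm
      _ < M * (X : K) + e := add_lt_add_of_le_of_lt this h1

lemma abs_sum_mul_le {K ι : Type*} [CommRing K] [LinearOrder K] [IsStrictOrderedRing K] [Fintype ι]
    (v b : ι → K) (B : K) (hv : ∀ i, |v i| ≤ B) :
    |∑ i, v i * b i| ≤ B * ∑ i, |b i| := by
  rw [Finset.mul_sum]
  refine (Finset.abs_sum_le_sum_abs _ _).trans (Finset.sum_le_sum fun i _ => ?_)
  rw [abs_mul]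
  exact mul_le_mul_of_nonneg_right (hv i) (abs_nonneg _)

/-- The rounding statement for vectors with at most `k` nonzero entries. -/
lemma exists_rounding_of_card_support_le (d N : ℕ) (hN : 0 < N) (k : ℕ) :
    ∀ w : Fin d → ℚ, (Finset.univ.filter fun i => w i ≠ 0).card ≤ k →
    ∃ wb : Fin d → ℤ,
      (∀ i, |wb i| ≤ (2 * (N : ℤ) ^ (d + 1)) ^ k) ∧
      ∀ b : Fin d → ℤ, (∑ i, |b i|) ≤ (N : ℤ) - 1 →
        SignType.sign (∑ i, w i * (b i : ℚ)) = SignType.sign (∑ i, wb i * b i) := by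
  have hNZ : (1 : ℤ) ≤ N := by exact_mod_cast hN
  have hNQ : (0 : ℚ) < N := by exact_mod_cast hN
  have hND : (1 : ℤ) ≤ (N : ℤ) ^ (d + 1) := one_le_pow₀ hNZ
  induction k with
  | zero =>
    intro w hw
    have hw0 : ∀ i, w i = 0 := by simpa [Finset.filter_eq_empty_iff] using hw
    exact ⟨0, by simp, by simp [hw0]⟩
  | succ k ih =>
    intro w hw
    by_cases hw0 : ∀ i, w i = 0
    · exact ⟨0, fun i => by simp, by simp [hw0]⟩
    push Not at hw0
    obtain ⟨i₁, hi₁⟩ := hw0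
    obtain ⟨i₀, -, hmax⟩ := Finset.exists_max_image Finset.univ (fun i => |w i|) ⟨i₁, by simp⟩
    set m := |w i₀| with hm
    have hm0 : 0 < m := (abs_pos.2 hi₁).trans_le (hmax i₁ (by simp))
    obtain ⟨q, p, hq0, hqN, hp⟩ := exists_simultaneous_approx d N hN fun i => w i / m
    have hqQ : (0 : ℚ) < q := by exact_mod_cast hq0
    have hinv : (1 : ℚ) / N ≤ 1 := by
      rw [div_le_one hNQ]; exact_mod_cast hN
    have hp1 : ∀ i, |(q : ℚ) * (w i / m) - p i| < 1 := fun i => (hp i).trans_le hinv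
    -- an integral entry of `q w / m` is reproduced exactly by `p`
    have hint : ∀ i (z : ℤ), (q : ℚ) * (w i / m) = z → (q : ℚ) * (w i / m) - p i = 0 := by
      intro i z hz
      have h := hp1 i
      rw [hz] at h ⊢
      have h' : |z - p i| < 1 := by exact_mod_cast h
      have := Int.abs_lt_one_iff.1 h'
      exact_mod_cast this
    obtain ⟨v, hvB, hv⟩ := ih (fun i => (q : ℚ) * (w i / m) - p i) (by
      refine Nat.le_of_lt_succ (lt_of_lt_of_le (Finset.card_lt_card ?_) hw)
      rw [Finset.ssubset_iff_of_subset]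
      · refine ⟨i₀, by simpa using abs_pos.1 hm0, ?_⟩
        have : (q : ℚ) * (w i₀ / m) - p i₀ = 0 := by
          rcases abs_choice (w i₀) with h | h
          · refine hint i₀ q ?_
            rw [hm, h, div_self (abs_pos.1 hm0)]; simp
          · refine hint i₀ (-q) ?_
            rw [hm, h, div_neg, div_self (abs_pos.1 hm0)]; simp
        simp [this]
      · intro i hi
        simp only [Finset.mem_filter, Finset.mem_univ, true_and] at hi ⊢
        intro h0
        exact hi (hint i 0 (by simp [h0])))
    set B : ℤ := (2 * (N : ℤ) ^ (d + 1)) ^ k with hB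
    have hB1 : 1 ≤ B := one_le_pow₀ (by linarith)
    have hpq : ∀ i, |p i| ≤ (N : ℤ) ^ d := by
      intro i
      have h1 : |w i / m| ≤ 1 := by
        rw [abs_div, abs_of_pos hm0, div_le_one hm0]
        exact hmax i (by simp)
      have h2 : |(q : ℚ) * (w i / m)| ≤ q := by
        rw [abs_mul, abs_of_pos hqQ]
        nlinarith
      have h3 : |(p i : ℚ)| < q + 1 := by
        have := abs_sub_abs_le_abs_sub (p i : ℚ) ((q : ℚ) * (w i / m))
        rw [abs_sub_comm] at this
        linarith [hp1 i]
      have h4 : |p i| < q + 1 := by exact_mod_cast h3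
      have h5 : (q : ℤ) ≤ (N : ℤ) ^ d := by exact_mod_cast hqN
      omega
    refine ⟨fun i => N * B * p i + v i, fun i => ?_, fun b hb => ?_⟩
    · calc |N * B * p i + v i| ≤ |N * B * p i| + |v i| := abs_add_le _ _
        _ = N * B * |p i| + |v i| := by
          rw [abs_mul, abs_of_nonneg (by positivity : (0 : ℤ) ≤ N * B)]
        _ ≤ N * B * (N : ℤ) ^ d + B :=
          add_le_add (mul_le_mul_of_nonneg_left (hpq i) (by positivity)) (hvB i)
        _ ≤ N * B * (N : ℤ) ^ d + (N : ℤ) ^ (d + 1) * B := by nlinarith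
        _ = (2 * (N : ℤ) ^ (d + 1)) ^ (k + 1) := by rw [pow_succ _ k, ← hB]; ring
    · have hv' := hv b hb
      set e : ℚ := ∑ i, ((q : ℚ) * (w i / m) - p i) * (b i : ℚ) with he
      set X : ℤ := ∑ i, p i * b i with hX
      have hwb : ∑ i, (N * B * p i + v i) * b i = (N * B) * X + ∑ i, v i * b i := by
        rw [hX, Finset.mul_sum, ← Finset.sum_add_distrib]
        exact Finset.sum_congr rfl fun i _ => by ring
      have hqw : (q / m : ℚ) * ∑ i, w i * (b i : ℚ) = 1 * (X : ℚ) + e := by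
        rw [hX, he, Finset.mul_sum, one_mul]
        push_cast
        rw [← Finset.sum_add_distrib]
        exact Finset.sum_congr rfl fun i _ => by ring
      have hsw : SignType.sign (∑ i, w i * (b i : ℚ)) = SignType.sign (1 * (X : ℚ) + e) := by
        rw [← hqw, sign_mul, sign_pos (div_pos hqQ hm0), one_mul]
      rw [hsw, hwb]
      by_cases hX0 : X = 0
      · simpa [hX0] using hv'
      · rw [sign_mul_add_of_abs_lt X hX0 1 e ?_]
        · have := sign_mul_add_of_abs_lt X hX0 ((N : ℤ) * B) (∑ i, v i * b i) ?_
          · exact this.symm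
          · have := abs_sum_mul_le v b B hvB
            nlinarith
        · have h1 := abs_sum_mul_le (fun i => (q : ℚ) * (w i / m) - p i) (fun i => (b i : ℚ))
            (1 / N) fun i => (hp i).le
          have h2 : ∑ i, |(b i : ℚ)| ≤ N - 1 := by exact_mod_cast hb
          refine h1.trans_lt ?_
          rw [one_div, inv_mul_lt_iff₀ hNQ]
          linarith

/-- **Frank–Tardos rounding** (Proposition 1).
For every positive integer `d`, every vector `w ∈ ℚ^d` and every positive integer `N`,
there exists a vector `w̄ ∈ ℤ^d` with `‖w̄‖_∞ ≤ 2^{4d³} · N^{d(d+2)}` such that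
`sign (w · b) = sign (w̄ · b)` for every `b ∈ ℤ^d` with `‖b‖₁ ≤ N − 1`. -/
theorem frank_tardos (d : ℕ) (hd : 0 < d) (w : Fin d → ℚ) (N : ℕ) (hN : 0 < N) :
    ∃ wb : Fin d → ℤ,
      (∀ i, |wb i| ≤ 2 ^ (4 * d ^ 3) * (N : ℤ) ^ (d * (d + 2))) ∧
      ∀ b : Fin d → ℤ, (∑ i, |b i|) ≤ (N : ℤ) - 1 →
        SignType.sign (∑ i, w i * (b i : ℚ)) = SignType.sign (∑ i, wb i * b i) := by
  obtain ⟨wb, h1, h2⟩ := exists_rounding_of_card_support_le d N hN d w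
    ((Finset.card_filter_le _ _).trans (by simp))
  refine ⟨wb, fun i => (h1 i).trans ?_, h2⟩
  rw [mul_pow, ← pow_mul]
  have hNZ : (1 : ℤ) ≤ N := by exact_mod_cast hN
  have hd3 : d ≤ 4 * d ^ 3 := by
    have := Nat.le_self_pow (n := 3) (by norm_num) d
    omega
  have hdd : (d + 1) * d ≤ d * (d + 2) := by nlinarith
  exact mul_le_mul (pow_le_pow_right₀ (by norm_num) hd3) (pow_le_pow_right₀ hNZ hdd)
    (by positivity) (by positivity)
end

section
/- Let H be a connected loopless undirected multigraph, let s and t be two (not necessarily distinct) vertices of H, and let f = |E(H)| − |V(H)| + 1 be its cyclomatic number. Assume that (i) every vertex of H other than s and t has degree at least 2, and (ii) no edge of H joins two vertices that both have degree exactly 2 and both lie outside {s, t}. Then |V(H)| ≤ 8f + 3 and |E(H)| ≤ 9f + 2. -/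
/-!
Let `T = {s, t}`, let `A` be the set of vertices of degree exactly `2` outside `T`, and let `B` be
the set of vertices of degree at least `3` outside `T`; by the degree hypothesis these three sets
partition the vertices.  Write `n = |V|` and `m = |E| = n + f - 1`.

* Since the graph is loopless, the degrees sum to `2m`.  The vertices of `T` have total degree at
  least `2|T| - 2`: this is void if `s = t`, and if `s ≠ t` connectedness makes both degrees
  positive.  Hence `2n + 2f - 2 ≥ 2|A| + 3|B| + 2|T| - 2`, that is, `|B| ≤ 2f`.
* `A` is independent, so every edge has at most one end in `A` and `2|A| ≤ m`.  Hence
  `|A| ≤ |B| + |T| + f - 1 ≤ 3f + 1`.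

Together `n ≤ 5f + 3` and `m ≤ 6f + 2`, which is stronger than what is claimed.  Both estimates
on degree sums rest on the double count `sum_degree_eq_sum_ends`.
-/

/-- Double counting of the incidences between a vertex set `S` and the edges. -/
lemma sum_degree_eq_sum_ends {V Eid : Type} [DecidableEq V]
    (edges : Finset Eid) (ends : Eid → Sym2 V) (deg : V → ℕ)
    (hdeg : ∀ v : V, deg v = {e : Eid | e ∈ edges ∧ v ∈ ends e}.ncard) (S : Finset V) :
    ∑ v ∈ S, deg v = ∑ e ∈ edges, (S.filter (fun v => v ∈ ends e)).card := by
  have h : ∀ v, deg v = (edges.filter (fun e => v ∈ ends e)).card := fun v => by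
    rw [hdeg, ← Set.ncard_coe_finset, Finset.coe_filter]
  simp only [h]
  exact Finset.sum_card_bipartiteAbove_eq_sum_card_bipartiteBelow (fun v e => v ∈ ends e)

/-- In a connected graph with at least two vertices there is no isolated vertex. -/
lemma one_le_degree_of_ne {V Eid : Type}
    (edges : Finset Eid) (ends : Eid → Sym2 V) (deg : V → ℕ)
    (hdeg : ∀ v : V, deg v = {e : Eid | e ∈ edges ∧ v ∈ ends e}.ncard)
    (hconn : ∀ u v : V,
      Relation.ReflTransGen (fun a b => ∃ e ∈ edges, ends e = s(a, b)) u v)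
    {u v : V} (huv : u ≠ v) : 1 ≤ deg u := by
  rcases (hconn u v).cases_head with h | ⟨w, ⟨e, he, hew⟩, -⟩
  · exact absurd h huv
  · rw [hdeg, Nat.one_le_iff_ne_zero]
    refine Set.ncard_ne_zero_of_mem (a := e) ⟨he, by simp [hew]⟩ ?_
    exact edges.finite_toSet.subset fun x hx => hx.1

/-- **Claim 1 (size bound from the feedback edge number).**
Let `H` be a connected loopless undirected multigraph (vertex type `V`, edge index type
`Eid`, edge set `edges`, endpoints given by `ends : Eid → Sym2 V`), let `s t : V` and let
`f = |E(H)| − |V(H)| + 1` be its cyclomatic number (stated as `|E| + 1 = |V| + f` to avoid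
truncated subtraction).  Assume that every vertex other than `s` and `t` has degree at
least `2` (degrees count parallel edges with multiplicity) and that no edge joins two
vertices that both have degree exactly `2` and both lie outside `{s, t}`.
Then `|V(H)| ≤ 8f + 3` and `|E(H)| ≤ 9f + 2`. -/
theorem multigraph_size_of_feedback_edge_number
    {V Eid : Type} [Fintype V] [DecidableEq V] [DecidableEq Eid]
    (edges : Finset Eid) (ends : Eid → Sym2 V)
    (hloopless : ∀ e ∈ edges, ¬ (ends e).IsDiag)
    (hconn : ∀ u v : V,
      Relation.ReflTransGen (fun a b => ∃ e ∈ edges, ends e = s(a, b)) u v)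
    (s t : V)
    (deg : V → ℕ)
    (hdeg : ∀ v : V, deg v = {e : Eid | e ∈ edges ∧ v ∈ ends e}.ncard)
    (hmindeg : ∀ v : V, v ≠ s → v ≠ t → 2 ≤ deg v)
    (hno2adj : ∀ e ∈ edges, ∀ u v : V, ends e = s(u, v) →
      u ≠ s → u ≠ t → v ≠ s → v ≠ t → ¬ (deg u = 2 ∧ deg v = 2))
    (f : ℕ) (hf : edges.card + 1 = Fintype.card V + f) :
    Fintype.card V ≤ 8 * f + 3 ∧ edges.card ≤ 9 * f + 2 := by
  have hsum := sum_degree_eq_sum_ends edges ends deg hdeg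
  set T : Finset V := {s, t} with hT
  set A : Finset V := Tᶜ.filter (fun v => deg v = 2) with hA
  set B : Finset V := Tᶜ.filter (fun v => ¬ deg v = 2) with hB
  have hcard : A.card + B.card + T.card = Fintype.card V := by
    rw [hA, hB, Finset.card_filter_add_card_filter_not, Finset.card_compl_add_card]
  have hsplit : ∑ v ∈ A, deg v + ∑ v ∈ B, deg v + ∑ v ∈ T, deg v = ∑ v, deg v := by
    rw [hA, hB, Finset.sum_filter_add_sum_filter_not, Finset.sum_compl_add_sum]
  have htotal : ∑ v, deg v = edges.card * 2 := by
    rw [hsum]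
    refine Finset.sum_const_nat fun e he => ?_
    have hl := hloopless e he
    induction h : ends e with | _ a b
    rw [h, Sym2.mk_isDiag_iff] at hl
    rw [← Finset.card_pair hl]
    congr 1
    ext v
    simp
  have hsumA : ∑ v ∈ A, deg v = A.card * 2 :=
    Finset.sum_const_nat fun v hv => (Finset.mem_filter.1 hv).2
  have hindep : ∑ v ∈ A, deg v ≤ edges.card := by
    rw [hsum, Finset.card_eq_sum_ones]
    refine Finset.sum_le_sum fun e he => Finset.card_le_one.2 fun a ha b hb => ?_
    by_contra hab
    simp only [hA, hT, Finset.mem_filter, Finset.mem_compl, Finset.mem_insert,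
      Finset.mem_singleton, not_or] at ha hb
    exact hno2adj e he a b ((Sym2.mem_and_mem_iff hab).1 ⟨ha.2, hb.2⟩)
      ha.1.1.1 ha.1.1.2 hb.1.1.1 hb.1.1.2 ⟨ha.1.2, hb.1.2⟩
  have hsumB : B.card * 3 ≤ ∑ v ∈ B, deg v := by
    rw [← smul_eq_mul]
    refine Finset.card_nsmul_le_sum _ _ _ fun v hv => ?_
    simp only [hB, hT, Finset.mem_filter, Finset.mem_compl, Finset.mem_insert,
      Finset.mem_singleton, not_or] at hv
    have := hmindeg v hv.1.1 hv.1.2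
    omega
  have hsumT : 2 * T.card ≤ ∑ v ∈ T, deg v + 2 := by
    by_cases hst : s = t
    · simp [hT, hst]
    · have h1 := one_le_degree_of_ne edges ends deg hdeg hconn hst
      have h2 := one_le_degree_of_ne edges ends deg hdeg hconn (Ne.symm hst)
      rw [hT, Finset.card_pair hst, Finset.sum_pair hst]
      omega
  have hcardT : T.card ≤ 2 := Finset.card_le_two
  omega
end
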